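/- Let R be a polynomial ring over an algebraically closed field K. Let I be an ideal generated by n ≥ 3 quadrics represented by minors by the 2×(n+1) matrix M = [[x, 0, 0, a_{13}, …, a_{1n}], [y, a_{21}, a_{22}, a_{23}, …, a_{2n}]], where all entries are linear forms or zero and x, y are linearly independent linear forms with ht(x, y) = 2. Then pd(R/I) ≤ 2n − 2. -/

import Mathlib

open MvPolynomial Filter

universe u

/-- `PdLE R n M` means the `R`-module `M` has projective dimension at most `n`:
either `M` is projective (`n = 0`), or `M` is a quotient of a free module by a
submodule of projective dimension at most `n - 1`. -/
def PdLE (R : Type u) [CommRing R] : ℕ → (M : Type u) → [AddCommGroup M] → [Module R M] → Prop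
  | 0, M, _, _ => Module.Projective R M
  | n + 1, M, _, _ => ∃ (F : Type u) (_ : AddCommGroup F) (_ : Module R F),
      Module.Free R F ∧ ∃ f : F →ₗ[R] M, Function.Surjective f ∧ PdLE R n (LinearMap.ker f)

/-- The projective dimension of an `R`-module `M`, as an element of `ℕ∞`
(`⊤` if `M` has no finite free resolution). -/
noncomputable def projDim (R : Type u) [CommRing R] (M : Type u) [AddCommGroup M]
    [Module R M] : ℕ∞ :=
  sInf ((fun n : ℕ => (n : ℕ∞)) '' {n : ℕ | PdLE R n M})

/-- The height of an ideal: the infimum of the heights of the prime ideals containing it. -/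
noncomputable def idealHeight {R : Type*} [CommRing R] (I : Ideal R) : ℕ∞ :=
  ⨅ p ∈ {p : PrimeSpectrum R | I ≤ p.asIdeal}, Order.height p

/-- The length of a module, defined as the Krull dimension of its lattice of submodules. -/
noncomputable def moduleLength (R : Type u) [CommRing R] (M : Type u) [AddCommGroup M]
    [Module R M] : WithBot ℕ∞ :=
  Order.krullDim (Submodule R M)

/-- `IsHSMultiplicity R mx I e` asserts that the Hilbert–Samuel multiplicity of `R/I`
with respect to the ideal `mx` equals `e`: for `d = dim R/I` there is a polynomial `P`
of degree `d` with `e = d! · (leading coefficient of P)` such that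
`length (R/(I + mx^n)) = P(n)` for all large `n`. -/
def IsHSMultiplicity (R : Type u) [CommRing R] (mx I : Ideal R) (e : ℕ) : Prop :=
  ∃ (d : ℕ) (P : Polynomial ℚ),
    ringKrullDim (R ⧸ I) = (d : WithBot ℕ∞) ∧
    P.natDegree = d ∧
    (e : ℚ) = P.leadingCoeff * d.factorial ∧
    ∀ᶠ n : ℕ in Filter.atTop, ∃ k : ℕ, (k : ℚ) = P.eval (n : ℚ) ∧
      moduleLength R (R ⧸ (I ⊔ mx ^ n)) = ((k : ℕ∞) : WithBot ℕ∞)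

/-- A matrix over a `K`-algebra is `1`-generic if it has no generalized zero entry:
for every nonzero vectors `u`, `v` of scalars, `uᵀ M v ≠ 0`. -/
def OneGeneric (K : Type*) [Field K] {R : Type u} [CommRing R] [Algebra K R]
    {m l : ℕ} (M : Matrix (Fin m) (Fin l) R) : Prop :=
  ∀ (u : Fin m → K) (v : Fin l → K), u ≠ 0 → v ≠ 0 →
    ∑ i, ∑ j, algebraMap K R (u i * v j) * M i j ≠ 0

/-- The ideal of all `2 × 2` minors of a `2 × l` matrix. -/
def minors2 {R : Type u} [CommRing R] {l : ℕ} (M : Matrix (Fin 2) (Fin l) R) : Ideal R :=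
  Ideal.span (Set.range fun p : Fin l × Fin l => M 0 p.1 * M 1 p.2 - M 0 p.2 * M 1 p.1)

/-- The homogeneous maximal ideal of a polynomial ring. -/
noncomputable def maxIdeal (K : Type*) [Field K] (σ : Type*) : Ideal (MvPolynomial σ K) :=
  Ideal.span (Set.range (X : σ → MvPolynomial σ K))

/-- The ideal represented by minors by the `2 × (n+1)` matrix with first column `(x, y)ᵀ`
and remaining columns `(u j, v j)ᵀ`: it is generated by the `2 × 2` minors involving
the first column. -/
def repByMinors {R : Type u} [CommRing R] {n : ℕ} (x y : R) (u v : Fin n → R) : Ideal R :=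
  Ideal.span (Set.range fun j : Fin n => x * v j - y * u j)

open CategoryTheory TensorProduct in
/-- projective dimension at most `n`, Mathlib version -/
def PD (R : Type u) [CommRing R] (M : Type u) [AddCommGroup M] [Module R M] (n : ℕ) : Prop :=
  HasProjectiveDimensionLE (ModuleCat.of R M) n

namespace PD
open CategoryTheory TensorProduct
variable {R : Type u} [CommRing R] {A B M : Type u} [AddCommGroup A] [Module R A]
  [AddCommGroup B] [Module R B] [AddCommGroup M] [Module R M]

lemma iso {n : ℕ} (e : A ≃ₗ[R] B) (h : PD R A n) : PD R B n := by
  unfold PD at *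
  exact hasProjectiveDimensionLT_of_iso (e.toModuleIso) (n + 1)

lemma mono {n k : ℕ} (h : PD R A n) (hk : n ≤ k) : PD R A k := by
  unfold PD at *
  exact hasProjectiveDimensionLT_of_ge _ (n + 1) (k + 1) (by omega)

lemma zero_iff : PD R A 0 ↔ Module.Projective R A := by
  unfold PD
  rw [← projective_iff_hasProjectiveDimensionLE_zero]
  exact (IsProjective.iff_projective A).symm

lemma of_projective (n : ℕ) [h : Module.Projective R A] : PD R A n :=
  mono (zero_iff.2 h) (Nat.zero_le _)

lemma se (f : A →ₗ[R] B) (g : B →ₗ[R] M) (hf : Function.Injective f)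
    (hg : Function.Surjective g) (h : Function.Exact f g) :
    (ShortComplex.mk (ModuleCat.ofHom f) (ModuleCat.ofHom g)
      (by ext x; simp [h.apply_apply_eq_zero])).ShortExact :=
  ModuleCat.shortComplex_shortExact _ h hf hg

lemma ses3 {n : ℕ} (f : A →ₗ[R] B) (g : B →ₗ[R] M) (hf : Function.Injective f)
    (hg : Function.Surjective g) (h : Function.Exact f g) (h1 : PD R A n) (h2 : PD R B (n+1)) :
    PD R M (n+1) :=
  (se f g hf hg h).hasProjectiveDimensionLT_X₃ (n+1) h1 h2

lemma ses1 {n : ℕ} (f : A →ₗ[R] B) (g : B →ₗ[R] M) (hf : Function.Injective f)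
    (hg : Function.Surjective g) (h : Function.Exact f g) (h1 : PD R B n) (h2 : PD R M (n+1)) :
    PD R A n :=
  (se f g hf hg h).hasProjectiveDimensionLT_X₁ (n+1) h1 h2

lemma quot {n : ℕ} (N : Submodule R M) (h1 : PD R N n) (h2 : PD R M (n+1)) :
    PD R (M ⧸ N) (n+1) :=
  ses3 N.subtype N.mkQ N.injective_subtype N.mkQ_surjective
    (LinearMap.exact_subtype_mkQ N) h1 h2

lemma sub {n : ℕ} (N : Submodule R M) (h1 : PD R M n) (h2 : PD R (M ⧸ N) (n+1)) :
    PD R N n :=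
  ses1 N.subtype N.mkQ N.injective_subtype N.mkQ_surjective
    (LinearMap.exact_subtype_mkQ N) h1 h2

lemma ker {n : ℕ} (f : B →ₗ[R] M) (hf : Function.Surjective f)
    (h1 : PD R B n) (h2 : PD R M (n+1)) :
    PD R (LinearMap.ker f) n :=
  ses1 (LinearMap.ker f).subtype f (Submodule.injective_subtype _) hf
    (LinearMap.exact_subtype_ker_map f) h1 h2

lemma of_ker {n : ℕ} (f : B →ₗ[R] M) (hf : Function.Surjective f)
    (h1 : PD R (LinearMap.ker f) n) (h2 : PD R B (n+1)) :
    PD R M (n+1) :=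
  ses3 (LinearMap.ker f).subtype f (Submodule.injective_subtype _) hf
    (LinearMap.exact_subtype_ker_map f) h1 h2

lemma toPdLE {n : ℕ} (h : PD R M n) : PdLE R n M := by
  induction n generalizing M with
  | zero => exact zero_iff.1 h
  | succ n ih =>
    refine ⟨M →₀ R, inferInstance, inferInstance, inferInstance,
      Finsupp.linearCombination R (id : M → M), ?_, ?_⟩
    · exact Finsupp.linearCombination_id_surjective R M
    · exact ih (ker _ (Finsupp.linearCombination_id_surjective R M) (of_projective _) h)

lemma aux_exact (T : Type u) [CommRing T] [Algebra R T] (f : A →ₗ[R] B) (g : B →ₗ[R] M)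
    (h : Function.Exact f g) (hg : Function.Surjective g) :
    Function.Exact (f.baseChange T) (g.baseChange T) :=
  lTensor_exact T h hg

lemma exists_ses (R : Type u) [CommRing R] (M : Type u) [AddCommGroup M] [Module R M] :
    ∃ (A F : Type u) (_ : AddCommGroup A) (_ : AddCommGroup F) (_ : Module R A) (_ : Module R F)
      (f : A →ₗ[R] F) (g : F →ₗ[R] M), Module.Free R F ∧ Function.Injective f ∧
      Function.Surjective g ∧ Function.Exact f g := by
  refine ⟨LinearMap.ker (Finsupp.linearCombination R (id : M → M)), M →₀ R,
    inferInstance, inferInstance, inferInstance, inferInstance, Submodule.subtype _,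
    Finsupp.linearCombination R (id : M → M), inferInstance, Submodule.injective_subtype _,
    Finsupp.linearCombination_id_surjective R M, LinearMap.exact_subtype_ker_map _⟩

lemma baseChange (T : Type u) [CommRing T] [Algebra R T] [Module.Flat R T] {n : ℕ}
    (h : PD R M n) : PD T (T ⊗[R] M) n := by
  induction n generalizing M with
  | zero =>
    have := zero_iff.1 h
    exact of_projective _
  | succ n ih =>
    obtain ⟨A, F, _, _, _, _, f, g, _, hf, hg, hfg⟩ := exists_ses R M
    have hk := ih (ses1 f g hf hg hfg (of_projective _) h)
    refine ses3 (f.baseChange T) (g.baseChange T) ?_ ?_ (aux_exact T f g hfg hg) hk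
      (of_projective _)
    · exact Module.Flat.lTensor_preserves_injective_linearMap _ hf
    · exact LinearMap.lTensor_surjective _ hg

section hilbert
open Polynomial
variable {S : Type u} [CommRing S] {V : Type u} [AddCommGroup V] [Module S V] [Module S[X] V]
  [IsScalarTower S S[X] V]

/-- multiplication by `X` as an `S`-linear map. -/
noncomputable def mulX (S : Type u) [CommRing S] (V : Type u) [AddCommGroup V] [Module S V]
    [Module S[X] V] [IsScalarTower S S[X] V] : V →ₗ[S] V :=
  (LinearMap.lsmul S[X] V X).restrictScalars S

noncomputable def thetaX (S : Type u) [CommRing S] (V : Type u) [AddCommGroup V] [Module S V]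
    [Module S[X] V] [IsScalarTower S S[X] V] : S[X] ⊗[S] V →ₗ[S[X]] V :=
  LinearMap.liftBaseChange S[X] LinearMap.id

noncomputable def deltaX (S : Type u) [CommRing S] (V : Type u) [AddCommGroup V] [Module S V]
    [Module S[X] V] [IsScalarTower S S[X] V] : S[X] ⊗[S] V →ₗ[S[X]] S[X] ⊗[S] V :=
  LinearMap.lsmul S[X] _ X - (mulX S V).baseChange S[X]

lemma delta_tmul (p : S[X]) (v : V) :
    deltaX S V (p ⊗ₜ v) = ((X : S[X]) * p) ⊗ₜ v - p ⊗ₜ ((X : S[X]) • v) := by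
  simp [deltaX, mulX, smul_tmul']

lemma theta_tmul (p : S[X]) (v : V) :
    thetaX S V (p ⊗ₜ v) = p • v := by
  simp [thetaX]

lemma delta_inj : Function.Injective (deltaX S V) := by
  rw [injective_iff_map_eq_zero]
  intro t ht
  let E := PolynomialModule.polynomialTensorProductLEquivPolynomialModule S V
  have hE : ∀ (p : S[X]) (v : V), E (p ⊗ₜ v) = p • PolynomialModule.single S 0 v := by
    intro p v; simp [E, PolynomialModule.polynomialTensorProductLEquivPolynomialModule]
    rfl
  have key : ∀ (t : S[X] ⊗[S] V) (n : ℕ), (E (deltaX S V t)).coeff (n+1) =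
      (E t).coeff n - (X : S[X]) • (E t).coeff (n+1) := by
    intro t n
    induction t with
    | zero => simp
    | add a b ha hb => simp only [map_add, PolynomialModule.coeff_add, Finsupp.add_apply, ha, hb, smul_add]; abel
    | tmul p v =>
      rw [delta_tmul, map_sub, hE, hE, hE]
      have : ∀ a b : PolynomialModule S V, (a - b).coeff = a.coeff - b.coeff := fun a b => rfl
      rw [this, Finsupp.sub_apply]
      simp only [PolynomialModule.smul_single_apply]
      rcases le_or_gt (n+1) 0 with h | h
      · omega
      · simp only [Nat.zero_le, if_true, Nat.sub_zero, Polynomial.coeff_X_mul]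
        rw [smul_comm]
  have h0 : ∀ n, (E t).coeff n = (X : S[X]) • (E t).coeff (n+1) := by
    intro n
    have := key t n
    rw [ht] at this
    simp at this
    exact (sub_eq_zero.1 this.symm)
  have h1 : ∀ k n, (E t).coeff n = (X : S[X])^k • (E t).coeff (n+k) := by
    intro k
    induction k with
    | zero => simp
    | succ k ih => intro n; rw [ih n, h0, smul_smul, ← pow_succ]; rfl
  have h2 : (E t).coeff = 0 := by
    ext n
    obtain ⟨b, hb⟩ := (E t).coeff.support.bddAbove
    rw [h1 (b+1) n, Finsupp.notMem_support_iff.1, smul_zero]; rfl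
    intro hh
    have := hb hh
    omega
  have := PolynomialModule.coeff_eq_zero.1 h2
  simpa using this

lemma delta_exact : Function.Exact (deltaX S V) (thetaX S V) := by
  have h1 : ∀ (n : ℕ) (v : V), ((X : S[X])^n) ⊗ₜ[S] v - 1 ⊗ₜ (((X : S[X])^n) • v) ∈
      LinearMap.range (deltaX S V) := by
    intro n v
    induction n with
    | zero => simp
    | succ n ih =>
      have h2 : deltaX S V (1 ⊗ₜ ((X : S[X])^n • v)) ∈ LinearMap.range (deltaX S V) := ⟨_, rfl⟩
      have h3 := add_mem (Submodule.smul_mem _ (X : S[X]) ih) h2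
      rw [delta_tmul] at h3
      convert h3 using 1
      rw [smul_sub, smul_tmul', smul_tmul', smul_smul, ← pow_succ']
      simp [pow_succ']
  have h2 : ∀ t, t - 1 ⊗ₜ thetaX S V t ∈ LinearMap.range (deltaX S V) := by
    intro t
    induction t with
    | zero => simp
    | add a b ha hb =>
      convert add_mem ha hb using 1
      rw [map_add, tmul_add]; abel
    | tmul p v =>
      rw [theta_tmul]
      induction p using Polynomial.induction_on' with
      | add p q hp hq =>
        convert add_mem hp hq using 1
        rw [add_smul, tmul_add, add_tmul]; abel
      | monomial n s =>
        have := h1 n (s • v)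
        have e : monomial n s = s • (X : S[X])^n := by rw [smul_X_eq_monomial]
        rw [e, smul_tmul]
        convert this using 3
        rw [smul_assoc, smul_comm]
  intro t
  constructor
  · intro h
    have := h2 t
    rwa [h, tmul_zero, sub_zero] at this
  · rintro ⟨t, rfl⟩
    induction t with
    | zero => simp
    | add a b ha hb => simp only [map_add, ha, hb, add_zero]
    | tmul p v =>
      rw [delta_tmul, map_sub, theta_tmul, theta_tmul, smul_smul, mul_comm, sub_self]

lemma polyStep {n : ℕ} (h : PD S V n) : PD S[X] V (n+1) := by
  refine ses3 (deltaX S V) (thetaX S V) delta_inj ?_ delta_exact (baseChange _ h)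
    ((baseChange _ h).mono (Nat.le_succ n))
  intro v
  exact ⟨1 ⊗ₜ v, by simp [theta_tmul]⟩

end hilbert

/-- transport along ring equivalence -/
lemma all_of_ringEquiv {S T : Type u} [CommRing S] [CommRing T] (e : S ≃+* T) {n : ℕ}
    (h : ∀ (V : Type u) [AddCommGroup V] [Module S V], PD S V n) :
    ∀ (V : Type u) [AddCommGroup V] [Module T V], PD T V n := by
  intro V _ _
  let : Module S V := Module.compHom V (e : S →+* T)
  let := (e : S →+* T).toAlgebra
  have hb : Function.Bijective (algebraMap S T) := e.bijective
  have : Module.Flat S T := by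
    have := RingHom.Flat.of_bijective (f := (e : S →+* T)) e.bijective
    exact this
  have : IsScalarTower S T V := ⟨fun a b c => by
    change (e a * b) • c = e a • (b • c)
    rw [mul_smul]⟩
  have h1 := baseChange T (h V)
  refine iso (LinearEquiv.ofBijective (LinearMap.liftBaseChange T LinearMap.id) ?_) h1
  have hsurj : ∀ t : T ⊗[S] V, ∃ v : V, t = 1 ⊗ₜ v := by
    intro t
    induction t with
    | zero => exact ⟨0, by simp⟩
    | add a b ha hb => 
      obtain ⟨v, rfl⟩ := ha
      obtain ⟨w, rfl⟩ := hb
      exact ⟨v + w, by simp [tmul_add]⟩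
    | tmul p v =>
      obtain ⟨s, rfl⟩ := hb.2 p
      exact ⟨s • v, by rw [← smul_tmul, Algebra.smul_def, mul_one]⟩
  constructor
  · rw [injective_iff_map_eq_zero]
    intro t ht
    obtain ⟨v, rfl⟩ := hsurj t
    simp at ht
    simp [ht]
  · intro v
    exact ⟨1 ⊗ₜ v, by simp⟩

theorem hilbert (K : Type u) [Field K] (d : ℕ) :
    ∀ (V : Type u) [AddCommGroup V] [Module (MvPolynomial (Fin d) K) V],
      PD (MvPolynomial (Fin d) K) V d := by
  induction d with
  | zero =>
    refine all_of_ringEquiv (MvPolynomial.isEmptyRingEquiv K (Fin 0)).symm ?_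
    intro V _ _
    exact of_projective _
  | succ d ih =>
    refine all_of_ringEquiv (MvPolynomial.finSuccEquiv K d).symm.toRingEquiv ?_
    intro V _ _
    let : Module (MvPolynomial (Fin d) K) V := Module.compHom V (Polynomial.C)
    have : IsScalarTower (MvPolynomial (Fin d) K) (Polynomial (MvPolynomial (Fin d) K)) V :=
      ⟨fun a b c => by
        rw [Polynomial.smul_eq_C_mul, mul_smul]; rfl⟩
    exact polyStep (ih V)

end PD

/-- cokernel of a matrix with two rows, whose set of columns is `s` -/
abbrev Cok {S : Type u} [CommRing S] (s : Set (S × S)) : Type u := (S × S) ⧸ Submodule.span S s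

section bc
open TensorProduct
variable {S R : Type u} [CommRing S] [CommRing R]

lemma cok_bc (φ : S →+* R) (hφ : φ.Flat) (s : Set (S × S)) {n : ℕ} (h : PD S (Cok s) n) :
    PD R (Cok (Prod.map φ φ '' s)) n := by
  algebraize [φ]
  have h1 := PD.baseChange R h
  let ψ : S × S →ₗ[S] R × R := (Algebra.linearMap S R).prodMap (Algebra.linearMap S R)
  have hψ : ∀ w, ψ w = Prod.map φ φ w := fun w => rfl
  let F0 : Cok s →ₗ[S] Cok (Prod.map φ φ '' s) :=
    Submodule.liftQ _ (((Submodule.mkQ _).restrictScalars S).comp ψ) (by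
      rw [Submodule.span_le]
      intro w hw
      simp only [SetLike.mem_coe, LinearMap.mem_ker, LinearMap.comp_apply]
      change (Submodule.mkQ (Submodule.span R (Prod.map φ φ '' s))) (ψ w) = 0
      rw [Submodule.mkQ_apply, Submodule.Quotient.mk_eq_zero]
      exact Submodule.subset_span ⟨w, hw, rfl⟩)
  let F : R ⊗[S] Cok s →ₗ[R] Cok (Prod.map φ φ '' s) := LinearMap.liftBaseChange R F0
  let e1 : Cok s := Submodule.Quotient.mk (1, 0)
  let e2 : Cok s := Submodule.Quotient.mk (0, 1)
  have he : ∀ a b : S, (Submodule.Quotient.mk (a, b) : Cok s) = a • e1 + b • e2 := by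
    intro a b
    simp only [e1, e2, ← Submodule.Quotient.mk_smul, ← Submodule.Quotient.mk_add]
    congr 1
    simp
  let G0 : R × R →ₗ[R] R ⊗[S] Cok s :=
    LinearMap.coprod (LinearMap.toSpanSingleton R _ (1 ⊗ₜ e1)) (LinearMap.toSpanSingleton R _ (1 ⊗ₜ e2))
  have hG0 : ∀ a b : S, G0 (φ a, φ b) = 1 ⊗ₜ (Submodule.Quotient.mk (a, b) : Cok s) := by
    intro a b
    rw [he, tmul_add, ← smul_tmul, ← smul_tmul]
    simp [G0, smul_tmul', Algebra.smul_def]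
    rfl
  let G : Cok (Prod.map φ φ '' s) →ₗ[R] R ⊗[S] Cok s :=
    Submodule.liftQ _ G0 (by
      rw [Submodule.span_le]
      rintro _ ⟨⟨a, b⟩, hw, rfl⟩
      simp only [SetLike.mem_coe, LinearMap.mem_ker, Prod.map_apply]
      rw [hG0]
      have : (Submodule.Quotient.mk (a, b) : Cok s) = 0 := by
        rw [Submodule.Quotient.mk_eq_zero]
        exact Submodule.subset_span hw
      rw [this, tmul_zero])
  have hF1 : ∀ w : S × S, F (1 ⊗ₜ Submodule.Quotient.mk w) = Submodule.Quotient.mk (Prod.map φ φ w) := by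
    intro w
    simp only [F, LinearMap.liftBaseChange_tmul, one_smul]
    rfl
  refine PD.iso (LinearEquiv.ofLinearMap F G ?_ ?_) h1
  · apply LinearMap.ext
    intro w
    obtain ⟨⟨a, b⟩, rfl⟩ := Submodule.Quotient.mk_surjective _ w
    change F (G0 (a, b)) = _
    have : G0 (a, b) = a • (1 ⊗ₜ e1) + b • (1 ⊗ₜ e2) := rfl
    rw [this, map_add, map_smul, map_smul, hF1, hF1, ← Submodule.Quotient.mk_smul,
      ← Submodule.Quotient.mk_smul, ← Submodule.Quotient.mk_add]
    simp
  · apply LinearMap.ext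
    intro w
    induction w using TensorProduct.induction_on with
    | zero => simp
    | add p q hp hq => rw [map_add, hp, hq, map_add]
    | tmul p q =>
      obtain ⟨⟨a, b⟩, rfl⟩ := Submodule.Quotient.mk_surjective _ q
      have : (p ⊗ₜ[S] (Submodule.Quotient.mk (a, b) : Cok s)) = p • (1 ⊗ₜ (Submodule.Quotient.mk (a, b) : Cok s)) := by
        rw [smul_tmul', smul_eq_mul, mul_one]
      rw [this, map_smul, map_smul]
      congr 1
      rw [LinearMap.comp_apply, hF1]
      exact hG0 a b

lemma quot_bc (φ : S →+* R) (hφ : φ.Flat) (A : Ideal S) {n : ℕ} (h : PD S (S ⧸ A) n) :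
    PD R (R ⧸ A.map φ) n := by
  algebraize [φ]
  have h1 := PD.baseChange R h
  refine PD.iso ?_ h1
  exact (Algebra.TensorProduct.quotIdealMapEquivTensorQuot R A).symm.toLinearEquiv
end bc

section step
variable {S : Type u} [CommRing S]

/-- annihilator of the first basis vector in the cokernel -/
def Ann1 (s : Set (S × S)) : Ideal S := (Submodule.span S s).comap (LinearMap.inl S S S)

lemma mem_Ann1 {s : Set (S × S)} {r : S} : r ∈ Ann1 s ↔ (r, 0) ∈ Submodule.span S s := by
  simp [Ann1]

def QQ (s : Set (S × S)) : Prop :=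
  ∀ r : S, (r, (0 : S)) ∈ Submodule.span S s → ((0 : S), r) ∈ Submodule.span S s

def NZ1 (s : Set (S × S)) (a : S) : Prop :=
  ∀ r : S, (r * a, (0 : S)) ∈ Submodule.span S s → (r, (0 : S)) ∈ Submodule.span S s

open Polynomial in
abbrev extC (s : Set (S × S)) : Set (S[X] × S[X]) := Prod.map Polynomial.C Polynomial.C '' s

open Polynomial in
lemma mem_extC (s : Set (S × S)) (w : S[X] × S[X]) :
    w ∈ Submodule.span S[X] (extC s) ↔
      ∀ i, (w.1.coeff i, w.2.coeff i) ∈ Submodule.span S s := by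
  constructor
  · intro h
    induction h using Submodule.span_induction with
    | mem w hw =>
      obtain ⟨⟨a, b⟩, hab, rfl⟩ := hw
      intro i
      rcases i with _ | i
      · simpa using Submodule.subset_span hab
      · simp only [Prod.map_apply, coeff_C_succ]; exact Submodule.zero_mem _
    | zero => intro i; simp only [Prod.fst_zero, Prod.snd_zero, Polynomial.coeff_zero]; exact Submodule.zero_mem _
    | add x y _ _ hx hy => intro i; simpa using add_mem (hx i) (hy i)
    | smul p x _ hx =>
      intro i
      have : ((p • x).1.coeff i, (p • x).2.coeff i) = 
          ∑ k ∈ Finset.HasAntidiagonal.antidiagonal i, p.coeff k.1 • (x.1.coeff k.2, x.2.coeff k.2) := by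
        rw [Prod.ext_iff]
        simp [Polynomial.coeff_mul, Prod.fst_sum, Prod.snd_sum]
      rw [this]
      exact Submodule.sum_mem _ fun k _ => Submodule.smul_mem _ _ (hx _)
  · intro h
    have hC : ∀ a b, (a, b) ∈ Submodule.span S s → (Polynomial.C a, Polynomial.C b) ∈ Submodule.span S[X] (extC s) := by
      intro a b hab
      have := Submodule.mem_map_of_mem (f := ((Polynomial.CAlgHom (R := S) (A := S)).toLinearMap.prodMap (Polynomial.CAlgHom (R := S) (A := S)).toLinearMap)) hab
      rw [Submodule.map_span] at this
      exact Submodule.span_subset_span S S[X] _ this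
    have hw : w = ∑ i ∈ w.1.support ∪ w.2.support, (Polynomial.X : S[X])^i • (Polynomial.C (w.1.coeff i), Polynomial.C (w.2.coeff i)) := by
      rw [Prod.ext_iff]
      simp only [Prod.fst_sum, Prod.snd_sum, Prod.smul_fst, Prod.smul_snd, smul_eq_mul]
      constructor
      · conv_lhs => rw [w.1.as_sum_support_C_mul_X_pow]
        rw [← Finset.sum_subset Finset.subset_union_left]
        · exact Finset.sum_congr rfl fun _ _ => mul_comm _ _
        · intro x _ hx; simp [notMem_support_iff.1 hx]
      · conv_lhs => rw [w.2.as_sum_support_C_mul_X_pow]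
        rw [← Finset.sum_subset Finset.subset_union_right]
        · exact Finset.sum_congr rfl fun _ _ => mul_comm _ _
        · intro x _ hx; simp [notMem_support_iff.1 hx]
    rw [hw]
    exact Submodule.sum_mem _ fun i _ => Submodule.smul_mem _ _ (hC _ _ (h i))

open Polynomial in
lemma Ann1_extC (s : Set (S × S)) : Ann1 (extC s) = (Ann1 s).map Polynomial.C := by
  ext f
  rw [mem_Ann1, mem_extC, Ideal.mem_map_C_iff]
  simp [mem_Ann1]

open Polynomial in
lemma QQ_extC {s : Set (S × S)} (h : QQ s) : QQ (extC s) := by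
  intro r hr
  rw [mem_extC] at hr ⊢
  intro i
  simpa using h _ (by simpa using hr i)

open Polynomial in
lemma NZ1_extC (s : Set (S × S)) : NZ1 (extC s) Polynomial.X := by
  intro r hr
  rw [mem_extC] at hr ⊢
  intro i
  simpa using hr (i+1)

open Polynomial in
abbrev colX (s : Set (S × S)) (a : S) : Set (S[X] × S[X]) := insert (Polynomial.C a, Polynomial.X) (extC s)

open Polynomial in
lemma col_key {s : Set (S × S)} (h : QQ s) {a : S} (ha : NZ1 s a) (f : S[X])  :
    f • ((Polynomial.C a, Polynomial.X) : S[X] × S[X]) ∈ Submodule.span S[X] (extC s) ↔ f ∈ (Ann1 s).map Polynomial.C := by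
  rw [mem_extC, Ideal.mem_map_C_iff]
  constructor
  · intro hf n
    rw [mem_Ann1]
    induction n with
    | zero => exact ha _ (by simpa using hf 0)
    | succ n ih =>
      have h1 := h _ ih
      have h2 := sub_mem (hf (n+1)) h1
      exact ha _ (by simpa using h2)
  · intro hf n
    rcases n with _ | n
    · have := Submodule.smul_mem _ a (mem_Ann1.1 (hf 0))
      simpa [mul_comm] using this
    · have := add_mem (Submodule.smul_mem _ a (mem_Ann1.1 (hf (n+1)))) (h _ (mem_Ann1.1 (hf n)))
      simpa [mul_comm] using this

open Polynomial in
lemma col_nzd {s : Set (S × S)} (h : QQ s) {a : S} (ha : NZ1 s a) (w : S[X] × S[X])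
    (hw : (Polynomial.X : S[X]) • w ∈ Submodule.span S[X] (colX s a)) : w ∈ Submodule.span S[X] (colX s a) := by
  rw [Submodule.mem_span_insert] at hw ⊢
  obtain ⟨f, z, hz, e⟩ := hw
  have h0 : (f.coeff 0, (0:S)) ∈ Submodule.span S s := by
    have h1 := (mem_extC _ _).1 hz 0
    have h2 : z = (Polynomial.X : S[X]) • w - f • (Polynomial.C a, Polynomial.X) := by rw [e]; simp
    rw [h2] at h1
    apply ha
    have := neg_mem h1
    simpa using this
  have h3 : Polynomial.C (f.coeff 0) • ((Polynomial.C a, Polynomial.X) : S[X] × S[X]) ∈ Submodule.span S[X] (extC s) := by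
    rw [col_key h ha]
    exact Ideal.mem_map_of_mem _ (mem_Ann1.2 h0)
  refine ⟨f.divX, w - f.divX • (Polynomial.C a, Polynomial.X), ?_, by simp⟩
  have h4 : (Polynomial.X : S[X]) • (w - f.divX • ((Polynomial.C a, Polynomial.X) : S[X] × S[X])) ∈ Submodule.span S[X] (extC s) := by
    have := add_mem hz h3
    convert this using 1
    rw [smul_sub, e, smul_smul]
    conv_lhs => enter [1, 1, 1]; rw [← X_mul_divX_add f]
    rw [add_smul]; abel
  rw [mem_extC] at h4 ⊢
  intro i
  simpa using h4 (i+1)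

open Polynomial in
lemma QQ_col {s : Set (S × S)} (h : QQ s) {a : S} (ha : NZ1 s a) : QQ (colX s a) := by
  intro r hr
  apply col_nzd h ha
  have h1 : r • ((Polynomial.C a, Polynomial.X) : S[X] × S[X]) ∈ Submodule.span S[X] (colX s a) :=
    Submodule.smul_mem _ _ (Submodule.subset_span (Set.mem_insert _ _))
  have := sub_mem h1 (Submodule.smul_mem _ (Polynomial.C a) hr)
  convert this using 1
  simp [mul_comm]

open Polynomial in
lemma NZ1_col {s : Set (S × S)} (h : QQ s) {a : S} (ha : NZ1 s a) : NZ1 (colX s a) Polynomial.X := by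
  intro r hr
  apply col_nzd h ha
  simpa [mul_comm] using hr

lemma flatC : (Polynomial.C : S →+* Polynomial S).Flat := by
  have : Module.Flat S (Polynomial S) := inferInstance
  exact (RingHom.flat_algebraMap_iff (R := S) (S := Polynomial S)).2 this

open Polynomial in
lemma PD_col {s : Set (S × S)} (h : QQ s) {a : S} (ha : NZ1 s a) {n : ℕ}
    (h1 : PD S (Cok s) n) (h2 : PD S (S ⧸ Ann1 s) n) : PD S[X] (Cok (colX s a)) (n+1) := by
  have g1 : PD S[X] (Cok (extC s)) n := cok_bc Polynomial.C flatC s h1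
  have g2 := quot_bc Polynomial.C flatC _ h2
  let f : (S[X] ⧸ (Ann1 s).map Polynomial.C) →ₗ[S[X]] Cok (extC s) :=
    Submodule.liftQ _ (LinearMap.toSpanSingleton S[X] _ (Submodule.Quotient.mk (Polynomial.C a, Polynomial.X))) (by
      intro r hr
      simp only [LinearMap.mem_ker, LinearMap.toSpanSingleton_apply]
      rw [← Submodule.Quotient.mk_smul, Submodule.Quotient.mk_eq_zero, col_key h ha]
      exact hr)
  let g : Cok (extC s) →ₗ[S[X]] Cok (colX s a) :=
    Submodule.factor (Submodule.span_mono (Set.subset_insert _ _))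
  refine PD.ses3 f g ?_ ?_ ?_ g2 (g1.mono (Nat.le_succ _))
  · rw [injective_iff_map_eq_zero]
    intro r hr
    obtain ⟨r, rfl⟩ := Submodule.Quotient.mk_surjective _ r
    rw [Submodule.Quotient.mk_eq_zero]
    simp only [f, Submodule.liftQ_apply, LinearMap.toSpanSingleton_apply] at hr
    rwa [← Submodule.Quotient.mk_smul, Submodule.Quotient.mk_eq_zero, col_key h ha] at hr
  · exact Submodule.factor_surjective _
  · intro w
    obtain ⟨w, rfl⟩ := Submodule.Quotient.mk_surjective _ w
    change (Submodule.Quotient.mk w : Cok (colX s a)) = 0 ↔ _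
    constructor
    · intro hw
      rw [Submodule.Quotient.mk_eq_zero, Submodule.mem_span_insert] at hw
      obtain ⟨r, z, hz, rfl⟩ := hw
      refine ⟨Submodule.Quotient.mk r, ?_⟩
      simp only [f, Submodule.liftQ_apply, LinearMap.toSpanSingleton_apply]
      rw [Submodule.Quotient.mk_add, (Submodule.Quotient.mk_eq_zero _).2 hz, add_zero,
        Submodule.Quotient.mk_smul]
    · rintro ⟨r, hr⟩
      obtain ⟨r, rfl⟩ := Submodule.Quotient.mk_surjective _ r
      simp only [f, Submodule.liftQ_apply, LinearMap.toSpanSingleton_apply] at hr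
      rw [← Submodule.Quotient.mk_smul, Submodule.Quotient.eq] at hr
      rw [Submodule.Quotient.mk_eq_zero, Submodule.mem_span_insert]
      exact ⟨r, w - r • (Polynomial.C a, Polynomial.X), by simpa using neg_mem hr, by simp⟩

lemma PD_ann {s : Set (S × S)} {n : ℕ} (h1 : PD S (Cok s) n)
    (hall : ∀ (V : Type u) [AddCommGroup V] [Module S V], PD S V (n+1)) :
    PD S (S ⧸ Ann1 s) n := by
  let f : (S ⧸ Ann1 s) →ₗ[S] Cok s :=
    Submodule.mapQ _ _ (LinearMap.inl S S S) (le_refl _)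
  refine PD.ses1 f (LinearMap.range f).mkQ ?_ (Submodule.mkQ_surjective _) ?_ h1 (hall _)
  · rw [injective_iff_map_eq_zero]
    intro r hr
    obtain ⟨r, rfl⟩ := Submodule.Quotient.mk_surjective _ r
    rw [Submodule.Quotient.mk_eq_zero]
    change (Submodule.Quotient.mk (r, 0) : Cok s) = 0 at hr
    rw [Submodule.Quotient.mk_eq_zero] at hr
    exact mem_Ann1.2 hr
  · exact LinearMap.exact_map_mkQ_range f

end step

section transport
variable {S R : Type u} [CommRing S] [CommRing R]

lemma span_hom (φ : S →+* R) {s : Set (S × S)} {w : S × S} (h : w ∈ Submodule.span S s) :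
    Prod.map φ φ w ∈ Submodule.span R (Prod.map φ φ '' s) := by
  induction h using Submodule.span_induction with
  | mem w hw => exact Submodule.subset_span ⟨w, hw, rfl⟩
  | zero =>
    have : Prod.map φ φ (0 : S × S) = 0 := by ext <;> simp
    rw [this]; exact Submodule.zero_mem _
  | add x y _ _ hx hy =>
    have : Prod.map φ φ (x + y) = Prod.map φ φ x + Prod.map φ φ y := by ext <;> simp
    rw [this]; exact add_mem hx hy
  | smul p x _ hx =>
    have : Prod.map φ φ (p • x) = φ p • Prod.map φ φ x := by ext <;> simp
    rw [this]; exact Submodule.smul_mem _ _ hx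

lemma span_equiv (e : S ≃+* R) {s : Set (S × S)} {a b : R} :
    (a, b) ∈ Submodule.span R (Prod.map e e '' s) ↔ (e.symm a, e.symm b) ∈ Submodule.span S s := by
  constructor
  · intro h
    have := span_hom (e.symm : R →+* S) h
    rw [← Set.image_comp] at this
    have h2 : (Prod.map (e.symm : R →+* S) (e.symm : R →+* S)) ∘ (Prod.map e e) = id := by
      funext w; ext <;> simp
    rw [h2, Set.image_id] at this
    exact this
  · intro h
    have := span_hom (e : S →+* R) h
    simpa using this

lemma QQ_equiv (e : S ≃+* R) {s : Set (S × S)} (h : QQ s) : QQ (Prod.map e e '' s) := by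
  intro r hr
  rw [span_equiv] at hr ⊢
  rw [map_zero] at *
  exact h _ hr

lemma NZ1_equiv (e : S ≃+* R) {s : Set (S × S)} {a : S} (h : NZ1 s a) :
    NZ1 (Prod.map e e '' s) (e a) := by
  intro r hr
  rw [span_equiv] at hr ⊢
  rw [map_zero] at *
  apply h
  simpa using hr

lemma flat_equiv (e : S ≃+* R) : (e : S →+* R).Flat := RingHom.Flat.of_bijective e.bijective

lemma PD_equiv (e : S ≃+* R) {s : Set (S × S)} {n : ℕ} (h : PD S (Cok s) n) :
    PD R (Cok (Prod.map e e '' s)) n := cok_bc _ (flat_equiv e) s h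
end transport

abbrev PDC {S : Type u} [CommRing S] (s : Set (S × S)) (n : ℕ) : Prop := PD S (Cok s) n
abbrev PDA {S : Type u} [CommRing S] (s : Set (S × S)) (n : ℕ) : Prop := PD S (S ⧸ Ann1 s) n

section tower
variable {K : Type u} [Field K] {d : ℕ}

abbrev liftT (s : Set (MvPolynomial (Fin d) K × MvPolynomial (Fin d) K)) :
    Set (MvPolynomial (Fin (d+1)) K × MvPolynomial (Fin (d+1)) K) :=
  Prod.map (rename Fin.succ) (rename Fin.succ) '' s

noncomputable def eT (K : Type u) [Field K] (d : ℕ) :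
    Polynomial (MvPolynomial (Fin d) K) ≃+* MvPolynomial (Fin (d+1)) K :=
  (finSuccEquiv K d).symm.toRingEquiv

lemma eT_C (p : MvPolynomial (Fin d) K) : eT K d (Polynomial.C p) = rename Fin.succ p := by
  change (finSuccEquiv K d).symm _ = _
  rw [AlgEquiv.symm_apply_eq]
  induction p using MvPolynomial.induction_on with
  | C a => simp [finSuccEquiv_apply]
  | add p q hp hq => rw [map_add, map_add, map_add, hp, hq]
  | mul_X p i hp => rw [map_mul, map_mul, map_mul, hp, rename_X, finSuccEquiv_X_succ]

lemma eT_X : eT K d Polynomial.X = X 0 := by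
  change (finSuccEquiv K d).symm _ = _
  rw [AlgEquiv.symm_apply_eq, finSuccEquiv_X_zero]

lemma eT_ext (s : Set (MvPolynomial (Fin d) K × MvPolynomial (Fin d) K)) :
    Prod.map (eT K d) (eT K d) '' extC s = liftT s := by
  rw [extC, ← Set.image_comp]
  apply Set.image_congr
  rintro ⟨w1, w2⟩ _
  simp [eT_C]

lemma eT_col (s : Set (MvPolynomial (Fin d) K × MvPolynomial (Fin d) K)) (a : MvPolynomial (Fin d) K) :
    Prod.map (eT K d) (eT K d) '' colX s a = insert (rename Fin.succ a, X 0) (liftT s) := by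
  rw [colX, Set.image_insert_eq, eT_ext]
  simp [eT_C, eT_X]

variable {s : Set (MvPolynomial (Fin d) K × MvPolynomial (Fin d) K)} {a : MvPolynomial (Fin d) K}

lemma Ann_hilb (s : Set (MvPolynomial (Fin d) K × MvPolynomial (Fin d) K)) {n : ℕ}
    (hn : d ≤ n + 1) (h : PDC (s) n) : PDA s n :=
  PD_ann h fun V _ _ => (PD.hilbert K d V).mono hn

lemma QQ_lift (h : QQ s) : QQ (liftT s) := by
  rw [← eT_ext]; exact QQ_equiv _ (QQ_extC h)

lemma NZ_lift (s : Set (MvPolynomial (Fin d) K × MvPolynomial (Fin d) K)) : NZ1 (liftT s) (X 0) := by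
  rw [← eT_ext, ← eT_X]; exact NZ1_equiv _ (NZ1_extC s)

lemma PD_lift {n : ℕ} (h : PDC (s) n) : PDC ((liftT s)) n := by
  rw [← eT_ext]; exact PD_equiv _ (cok_bc _ flatC _ h)

lemma QQ_colT (h : QQ s) (ha : NZ1 s a) : QQ (insert (rename Fin.succ a, X 0) (liftT s)) := by
  rw [← eT_col]; exact QQ_equiv _ (QQ_col h ha)

lemma NZ_colT (h : QQ s) (ha : NZ1 s a) : NZ1 (insert (rename Fin.succ a, X 0) (liftT s)) (X 0) := by
  rw [← eT_col, ← eT_X]; exact NZ1_equiv _ (NZ1_col h ha)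

lemma PD_colT (h : QQ s) (ha : NZ1 s a) {n : ℕ} (h1 : PDC (s) n)
    (h2 : PDA s n) :
    PDC ((insert (rename Fin.succ a, X 0) (liftT s))) (n+1) := by
  rw [← eT_col]; exact PD_equiv _ (PD_col h ha h1 h2)

lemma Ann_lift {n : ℕ} (h2 : PDA s n) :
    PDA (liftT s) n := by
  have h3 := quot_bc _ (flat_equiv (eT K d)) _ (quot_bc _ flatC _ h2)
  have : Ann1 (liftT s) = ((Ann1 s).map Polynomial.C).map (eT K d : _ →+* _) := by
    rw [← Ann1_extC, ← eT_ext]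
    ext r
    rw [mem_Ann1, span_equiv, map_zero]
    have := Ideal.mem_map_of_equiv (I := Ann1 (extC s)) (eT K d) r
    constructor
    · intro h
      exact this.2 ⟨_, mem_Ann1.2 h, by simp⟩
    · intro h
      obtain ⟨q, hq, rfl⟩ := this.1 h
      simpa using mem_Ann1.1 hq
  unfold PDA; rw [this]; exact h3

/-- adding a generic column -/
abbrev colT (s : Set (MvPolynomial (Fin d) K × MvPolynomial (Fin d) K)) :
    Set (MvPolynomial (Fin (d+2)) K × MvPolynomial (Fin (d+2)) K) :=
  insert (rename Fin.succ (X 0), X 0) (liftT (liftT s))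

lemma QQ_colG (h : QQ s) : QQ (colT s) := QQ_colT (QQ_lift h) (NZ_lift s)

lemma NZ_colG (h : QQ s) : NZ1 (colT s) (X 0) := NZ_colT (QQ_lift h) (NZ_lift s)

lemma PD_colG (h : QQ s) {n : ℕ} (h1 : PDC (s) n)
    (h2 : PDA s n) : PDC ((colT s)) (n+1) :=
  PD_colT (QQ_lift h) (NZ_lift s) (PD_lift h1) (Ann_lift h2)

lemma PD_colG0 (h : QQ s) : PDC ((colT s)) (d+1) :=
  PD_colG h (PD.hilbert K d _) (PD.hilbert K d _)

lemma PD_colG2 (h : QQ s) : PDC ((colT (colT s))) (d+2) :=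
  PD_colG (QQ_colG h) (PD_colG0 h) (Ann_hilb _ le_rfl (PD_colG0 h))

lemma PD_colS (h : QQ s) : PDC ((insert (rename Fin.succ (-X 0), X 0) (liftT (colT s)))) (d+2) := by
  refine PD_colT (QQ_colG h) ?_ (PD_colG0 h) (Ann_hilb _ le_rfl (PD_colG0 h))
  intro r hr
  apply NZ_colG h
  have := neg_mem hr
  simpa using this
end tower

section GR
variable {K : Type u} [Field K] {A : Type u} [CommRing A] [Algebra K A] {d : ℕ}

def GR (K : Type u) [Field K] {A : Type u} [CommRing A] [Algebra K A] {d : ℕ}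
    (l : Fin d → A) (s : Set (A × A)) : Prop :=
  ∃ s0 : Set (MvPolynomial (Fin d) K × MvPolynomial (Fin d) K),
    Prod.map (aeval (R := K) l) (aeval (R := K) l) '' s0 = s ∧ QQ s0

def PDc (K : Type u) [Field K] {A : Type u} [CommRing A] [Algebra K A] {d : ℕ}
    (l : Fin d → A) (s : Set (A × A)) (p : ℕ) : Prop :=
  ∃ s0 : Set (MvPolynomial (Fin d) K × MvPolynomial (Fin d) K),
    Prod.map (aeval (R := K) l) (aeval (R := K) l) '' s0 = s ∧ PDC (s0) p

lemma image_lift (l : Fin d → A) (v : A)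
    (s0 : Set (MvPolynomial (Fin d) K × MvPolynomial (Fin d) K)) :
    Prod.map (aeval (R := K) (Fin.cons v l : Fin (d+1) → A)) (aeval (R := K) (Fin.cons v l : Fin (d+1) → A)) '' liftT s0
      = Prod.map (aeval (R := K) l) (aeval (R := K) l) '' s0 := by
  rw [liftT, ← Set.image_comp]
  apply Set.image_congr
  rintro ⟨w1, w2⟩ _
  have : (Fin.cons v l : Fin (d+1) → A) ∘ Fin.succ = l := by funext i; simp
  simp [aeval_rename, this]

lemma image_colT (l : Fin d → A) (u v : A)
    (s0 : Set (MvPolynomial (Fin d) K × MvPolynomial (Fin d) K)) :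
    Prod.map (aeval (R := K) (Fin.cons v (Fin.cons u l : Fin (d+1) → A) : Fin (d+2) → A))
      (aeval (R := K) (Fin.cons v (Fin.cons u l : Fin (d+1) → A) : Fin (d+2) → A)) '' colT s0
      = insert (u, v) (Prod.map (aeval (R := K) l) (aeval (R := K) l) '' s0) := by
  rw [colT, Set.image_insert_eq, image_lift, image_lift]
  simp only [Prod.map_apply, rename_X, aeval_X, Fin.cons_zero, Fin.cons_succ]

lemma GR.col {l : Fin d → A} {s : Set (A × A)} (h : GR K l s) (u v : A) :
    GR K (Fin.cons v (Fin.cons u l : Fin (d+1) → A) : Fin (d+2) → A) (insert (u, v) s) := by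
  obtain ⟨s0, rfl, h0⟩ := h
  exact ⟨_, image_colT l u v s0, QQ_colG h0⟩

lemma GR.last0 {l : Fin d → A} {s : Set (A × A)} (h : GR K l s) (u v : A) :
    PDc K (Fin.cons v (Fin.cons u l : Fin (d+1) → A) : Fin (d+2) → A) (insert (u, v) s) (d+1) := by
  obtain ⟨s0, rfl, h0⟩ := h
  exact ⟨_, image_colT l u v s0, PD_colG0 h0⟩

lemma GR.last1 {l : Fin d → A} {s : Set (A × A)} (h : GR K l s) (u v u' v' : A) :
    PDc K (Fin.cons v' (Fin.cons u' (Fin.cons v (Fin.cons u l : Fin (d+1) → A) : Fin (d+2) → A)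
      : Fin (d+3) → A) : Fin (d+4) → A) (insert (u', v') (insert (u, v) s)) (d+2) := by
  obtain ⟨s0, rfl, h0⟩ := h
  refine ⟨_, ?_, PD_colG2 h0⟩
  rw [image_colT, image_colT]

lemma GR.last2 {l : Fin d → A} {s : Set (A × A)} (h : GR K l s) (u v e : A) :
    PDc K (Fin.cons e (Fin.cons v (Fin.cons u l : Fin (d+1) → A) : Fin (d+2) → A)
      : Fin (d+3) → A) (insert (-v, e) (insert (u, v) s)) (d+2) := by
  obtain ⟨s0, rfl, h0⟩ := h
  refine ⟨_, ?_, PD_colS h0⟩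
  rw [Set.image_insert_eq, image_lift, image_colT]
  simp only [Prod.map_apply, map_neg, rename_X, aeval_X, Fin.cons_zero, Fin.cons_succ]

lemma GR.cols {l : Fin d → A} {s : Set (A × A)} (h : GR K l s) (k : ℕ) (c : Fin k → A × A) :
    ∃ l' : Fin (d + 2 * k) → A,
      Set.range l' = Set.range l ∪ (Set.range (fun j => (c j).1) ∪ Set.range (fun j => (c j).2)) ∧
      GR K l' (Set.range c ∪ s) := by
  induction k with
  | zero =>
    refine ⟨l, ?_, ?_⟩
    · simp
    · simpa using h
  | succ k ih =>
    obtain ⟨l', h1, h2⟩ := ih (fun j => c j.succ)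
    refine ⟨(Fin.cons (c 0).2 (Fin.cons (c 0).1 l' : Fin (d+2*k+1) → A) : Fin (d+2*k+2) → A), ?_, ?_⟩
    · rw [Fin.range_cons, Fin.range_cons, h1]
      ext z
      simp only [Set.mem_insert_iff, Set.mem_union, Set.mem_range, Fin.exists_fin_succ]
      grind
    · have := h2.col (c 0).1 (c 0).2
      have h3 : Set.range c ∪ s = insert ((c 0).1, (c 0).2) (Set.range (fun j : Fin k => c j.succ) ∪ s) := ?_
      · rw [h3]; exact this
      ext z
      simp only [Set.mem_insert_iff, Set.mem_union, Set.mem_range, Fin.exists_fin_succ]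
      grind

/-- the base with columns `(0, b₁), (0, b₂)` -/
lemma QQ_zero {S : Type u} [CommRing S] (b₁ b₂ : S) : QQ ({(0, b₁), (0, b₂)} : Set (S × S)) := by
  intro r hr
  rw [Submodule.mem_span_pair] at hr
  obtain ⟨f, g, h⟩ := hr
  rw [Prod.ext_iff] at h
  simp at h
  rw [← h.1]
  exact Submodule.zero_mem _

lemma QQ_base {S : Type u} [CommRing S] (p q b₁ b₂ e g₁ g₂ : S) (hp : p = e * q + g₁ * b₁ + g₂ * b₂) :
    QQ ({(p, q), (0, b₁), (0, b₂)} : Set (S × S)) := by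
  intro r hr
  rw [Submodule.mem_span_triple] at hr ⊢
  obtain ⟨f, g, h, H⟩ := hr
  rw [Prod.ext_iff] at H
  simp at H
  refine ⟨0, f * g₁ - e * g, f * g₂ - e * h, ?_⟩
  rw [Prod.ext_iff]
  simp
  rw [← H.1, hp]
  linear_combination (-e) * H.2

end GR

section flat
variable {K : Type u} [Field K] {N : ℕ}

lemma exists_basis_ext {V : Type u} [AddCommGroup V] [Module K V] {d : ℕ} (l : Fin d → V)
    (hl : LinearIndependent K l) : ∃ (κ : Type u) (b : Module.Basis (κ ⊕ Fin d) K V),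
      ∀ i, b (Sum.inr i) = l i := by
  obtain ⟨W, hW⟩ := Submodule.exists_isCompl (Submodule.span K (Set.range l))
  let b1 := Module.Basis.span hl
  let b2 := Module.Basis.ofVectorSpace K W
  refine ⟨_, (b2.prod b1).map (Submodule.prodEquivOfIsCompl _ _ hW.symm), ?_⟩
  intro i
  simp [b1, Module.Basis.span_apply]

lemma exists_linear_equiv {d : ℕ} (l : Fin d → MvPolynomial (Fin N) K)
    (hl : LinearIndependent K l) (hh : ∀ i, (l i).IsHomogeneous 1) :
    ∃ (κ : Type u) (Φ : MvPolynomial (κ ⊕ Fin d) K ≃ₐ[K] MvPolynomial (Fin N) K),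
      ∀ i, Φ (X (Sum.inr i)) = l i := by
  let H := homogeneousSubmodule (Fin N) K 1
  let l' : Fin d → H := fun i => ⟨l i, hh i⟩
  have hl' : LinearIndependent K l' := LinearIndependent.of_comp H.subtype (by exact hl)
  obtain ⟨κ, b, hb⟩ := exists_basis_ext l' hl'
  let f : MvPolynomial (κ ⊕ Fin d) K →ₐ[K] MvPolynomial (Fin N) K := aeval fun j => (b j : MvPolynomial (Fin N) K)
  let L : H →ₗ[K] MvPolynomial (κ ⊕ Fin d) K := b.constr K X
  have hL : ∀ j, L (b j) = X j := fun j => b.constr_basis K _ j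
  let x : Fin N → H := fun i => ⟨X i, isHomogeneous_X K i⟩
  let g : MvPolynomial (Fin N) K →ₐ[K] MvPolynomial (κ ⊕ Fin d) K := aeval fun i => L (x i)
  have h1 : f.toLinearMap ∘ₗ L = H.subtype := by
    apply b.ext
    intro j
    simp [hL, f]
  have h2 : g.toLinearMap ∘ₗ H.subtype = L := by
    have hx : Submodule.span K (Set.range x) = ⊤ := by
      apply Submodule.map_injective_of_injective H.injective_subtype
      rw [Submodule.map_span, ← Set.range_comp, Submodule.map_top, Submodule.range_subtype]
      exact (homogeneousSubmodule_one_eq_span_X (σ := Fin N) (R := K)).symm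
    apply LinearMap.ext_on_range hx
    intro i
    simp [g, x]
  refine ⟨κ, AlgEquiv.ofAlgHom f g ?_ ?_, ?_⟩
  · ext1 i
    have := LinearMap.congr_fun h1 (x i)
    simpa [g] using this
  · ext1 j
    have := LinearMap.congr_fun h2 (b j)
    rw [hL] at this
    simpa [f] using this
  · intro i
    simp [f, hb, l']

lemma flat_aeval {d : ℕ} (l : Fin d → MvPolynomial (Fin N) K)
    (hl : LinearIndependent K l) (hh : ∀ i, (l i).IsHomogeneous 1) :
    (aeval (R := K) l : MvPolynomial (Fin d) K →+* MvPolynomial (Fin N) K).Flat := by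
  obtain ⟨κ, Φ, hΦ⟩ := exists_linear_equiv l hl hh
  let Ψ : MvPolynomial κ (MvPolynomial (Fin d) K) ≃+* MvPolynomial (Fin N) K :=
    ((sumAlgEquiv K κ (Fin d)).symm.trans Φ).toRingEquiv
  have hC : (C : MvPolynomial (Fin d) K →+* MvPolynomial κ (MvPolynomial (Fin d) K)).Flat :=
    (RingHom.flat_algebraMap_iff (R := MvPolynomial (Fin d) K)
      (S := MvPolynomial κ (MvPolynomial (Fin d) K))).2 inferInstance
  have : (aeval (R := K) l : MvPolynomial (Fin d) K →+* MvPolynomial (Fin N) K)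
      = (Ψ : MvPolynomial κ (MvPolynomial (Fin d) K) →+* MvPolynomial (Fin N) K).comp C := by
    apply MvPolynomial.ringHom_ext
    · intro r
      have : Ψ (C (C r)) = C r := by
        change Φ ((sumAlgEquiv K κ (Fin d)).symm (C (C r))) = _
        rw [sumAlgEquiv_symm_C_C]
        exact Φ.commutes r
      simpa using this.symm
    · intro i
      have : Ψ (C (X i)) = l i := by
        change Φ ((sumAlgEquiv K κ (Fin d)).symm (C (X i))) = _
        rw [sumAlgEquiv_symm_C_X, hΦ]
      simpa using this.symm
  rw [this]
  exact RingHom.Flat.comp hC (flat_equiv Ψ)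

lemma lemW {e p : ℕ} {F : Fin e → MvPolynomial (Fin N) K} {s : Set (MvPolynomial (Fin N) K × MvPolynomial (Fin N) K)}
    (h : PDc K F s p) (hh : ∀ i, (F i).IsHomogeneous 1)
    (hF : LinearIndependent K F ∨ e ≤ p + 1) : PDC s p := by
  obtain ⟨s0, rfl, h0⟩ := h
  by_cases hi : LinearIndependent K F
  · exact cok_bc _ (flat_aeval F hi hh) s0 h0
  have he := hF.resolve_left hi
  let W := Submodule.span K (Set.range F)
  have hr : Module.finrank K W ≤ p := by
    have h1 := finrank_range_le_card (R := K) F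
    have h2 := linearIndependent_iff_card_eq_finrank_span.not.1 hi
    rw [Set.finrank] at h1 h2
    rw [Fintype.card_fin] at h1 h2
    change Module.finrank K (Submodule.span K (Set.range F)) ≤ p
    omega
  haveI : Module.Finite K W := Module.Finite.span_of_finite K (Set.finite_range F)
  let b := Module.finBasis K W
  let l : Fin (Module.finrank K W) → MvPolynomial (Fin N) K := fun i => b i
  have hl : LinearIndependent K l := b.linearIndependent.map' W.subtype (Submodule.ker_subtype _)
  have hWh : W ≤ homogeneousSubmodule (Fin N) K 1 := by
    rw [Submodule.span_le]; rintro _ ⟨i, rfl⟩; exact hh i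
  have hlh : ∀ i, (l i).IsHomogeneous 1 := fun i => hWh (b i).2
  have hg : ∀ i, ∃ g, aeval (R := K) l g = F i := by
    intro i
    have hi : F i ∈ W := Submodule.subset_span ⟨i, rfl⟩
    refine ⟨b.constr K (X : _ → MvPolynomial (Fin (Module.finrank K W)) K) ⟨F i, hi⟩, ?_⟩
    have : (aeval (R := K) l).toLinearMap ∘ₗ (b.constr K (X : _ → MvPolynomial (Fin (Module.finrank K W)) K)) = W.subtype := by
      apply b.ext
      intro j
      simp [b.constr_basis, l]
    exact LinearMap.congr_fun this ⟨F i, hi⟩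
  choose g hg using hg
  have h3 : (Prod.map (aeval (R := K) F) (aeval (R := K) F)) '' s0 =
      Prod.map (aeval (R := K) l) (aeval (R := K) l) '' (Prod.map (aeval (R := K) g) (aeval (R := K) g) '' s0) := by
    rw [← Set.image_comp]
    apply Set.image_congr
    rintro ⟨a, c⟩ _
    have h4 : aeval (R := K) F = (aeval (R := K) l).comp (aeval (R := K) g) := by
      apply MvPolynomial.algHom_ext
      intro i
      rw [AlgHom.comp_apply, aeval_X, aeval_X, hg]
    rw [h4]; rfl
  rw [h3]
  exact cok_bc _ (flat_aeval l hl hlh) _ ((PD.hilbert K _ _).mono hr)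

lemma coprime_xy {x y : MvPolynomial (Fin N) K} (hx : x.IsHomogeneous 1) (hy : y.IsHomogeneous 1)
    (hxy : LinearIndependent K ![x, y]) : Prime x ∧ ¬ x ∣ y := by
  obtain ⟨κ, Φ, hΦ⟩ := exists_linear_equiv ![x, y] hxy (by intro i; fin_cases i <;> assumption)
  have h0 := hΦ 0
  have h1 := hΦ 1
  simp at h0 h1
  rw [← h0, ← h1]
  constructor
  · exact (MulEquiv.prime_iff Φ.toMulEquiv).2 (X_prime)
  · intro h
    have := (map_dvd_iff Φ).1 h
    rw [X_dvd_X] at this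
    simp at this

end flat

section final
variable {K : Type u} [Field K]

lemma PDC_congr {R : Type u} [CommRing R] {s s' : Set (R × R)} {p : ℕ}
    (h : Submodule.span R s = Submodule.span R s') (h1 : PDC s p) : PDC s' p :=
  PD.iso (Submodule.quotEquivOfEq _ _ h) h1

lemma PDC_K {R : Type u} [CommRing R] [Algebra K R] {s s' : Set (R × R)} {p : ℕ}
    (h : s ⊆ Submodule.span K s') (h' : s' ⊆ Submodule.span K s) (h1 : PDC s p) : PDC s' p := by
  refine PDC_congr (le_antisymm ?_ ?_) h1
  · rw [Submodule.span_le]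
    exact h.trans (Submodule.span_subset_span K R s')
  · rw [Submodule.span_le]
    exact h'.trans (Submodule.span_subset_span K R s)

/-- the row operation -/
def rowOp (R : Type u) [CommRing R] : (R × R) ≃ₗ[R] (R × R) where
  toFun w := (w.1, w.2 + w.1)
  invFun w := (w.1, w.2 - w.1)
  map_add' a b := by ext <;> simp; ring
  map_smul' r a := by ext <;> simp; ring
  left_inv a := by ext <;> simp
  right_inv a := by ext <;> simp

lemma PDC_row {R : Type u} [CommRing R] {s : Set (R × R)} {p : ℕ}
    (h : PDC (rowOp R '' s) p) : PDC s p :=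
  PD.iso (Submodule.Quotient.equiv (Submodule.span R s) (Submodule.span R (rowOp R '' s))
    (rowOp R) (Submodule.map_span _ _)).symm h

lemma complete {M : Type u} [AddCommGroup M] [Module K M] {n k j : ℕ} (hn : k + j = n)
    (c : Fin n → M) (v : Fin k → (Fin n → K)) (hv : LinearIndependent K v) :
    ∃ w : Fin j → M, Submodule.span K (Set.range c) =
      Submodule.span K (Set.range (fun i => Fintype.linearCombination K c (v i)) ∪ Set.range w) := by
  obtain ⟨W, hW⟩ := Submodule.exists_isCompl (Submodule.span K (Set.range v))
  have h1 := Submodule.finrank_add_eq_of_isCompl hW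
  rw [finrank_span_eq_card hv, Module.finrank_fin_fun, Fintype.card_fin] at h1
  let b := Module.finBasisOfFinrankEq K W (show Module.finrank K W = j by omega)
  refine ⟨fun i => Fintype.linearCombination K c (b i), ?_⟩
  have h2 : Submodule.span K (Set.range v ∪ Set.range (fun i => (b i : Fin n → K))) = ⊤ := by
    rw [Submodule.span_union, ← hW.sup_eq_top]
    congr 1
    have h3 := b.span_eq
    have h4 := congrArg (Submodule.map W.subtype) h3
    rw [Submodule.map_span, ← Set.range_comp, Submodule.map_top, Submodule.range_subtype] at h4
    exact h4
  rw [← Fintype.range_linearCombination, ← Submodule.map_top, ← h2, Submodule.map_span,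
    Set.image_union, ← Set.range_comp, ← Set.range_comp]
  rfl

lemma GR_zero {A : Type u} [CommRing A] [Algebra K A] {d : ℕ} (l : Fin d → A)
    (p q : MvPolynomial (Fin d) K) {b₁ b₂ : A} (h1 : aeval l p = b₁) (h2 : aeval l q = b₂) :
    GR K l {(0, b₁), (0, b₂)} := by
  refine ⟨{(0, p), (0, q)}, ?_, QQ_zero p q⟩
  rw [Set.image_pair]
  simp [h1, h2]

lemma GR_base {A : Type u} [CommRing A] [Algebra K A] (u v b₁ b₂ : A) (e g₁ g₂ : K)
    (h : u = e • v + g₁ • b₁ + g₂ • b₂) :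
    GR K ![v, b₁, b₂] {(u, v), (0, b₁), (0, b₂)} := by
  refine ⟨{(C e * X 0 + C g₁ * X 1 + C g₂ * X 2, X 0), (0, X 1), (0, X 2)}, ?_, QQ_base _ _ _ _ _ _ _ rfl⟩
  rw [Set.image_insert_eq, Set.image_pair]
  simp [h, Algebra.smul_def]

variable {N : ℕ}

lemma lemW' {e p q : ℕ} {F : Fin e → (MvPolynomial (Fin N) K)} {s s' : Set ((MvPolynomial (Fin N) K) × (MvPolynomial (Fin N) K))}
    (h : PDc K F s p) (hh : ∀ z ∈ Set.range F, z.IsHomogeneous 1)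
    (hF : LinearIndependent K F ∨ e ≤ p + 1) (hs : s' = s) (hp : p = q) : PDC s' q := by
  subst hs hp
  exact lemW h (fun i => hh _ ⟨i, rfl⟩) hF

lemma caseInd {k : ℕ} (c : Fin (k+2) → (MvPolynomial (Fin N) K) × (MvPolynomial (Fin N) K)) (b₁ b₂ : (MvPolynomial (Fin N) K))
    (hc : ∀ j, (c j).1.IsHomogeneous 1 ∧ (c j).2.IsHomogeneous 1)
    (hb₁ : b₁.IsHomogeneous 1) (hb₂ : b₂.IsHomogeneous 1)
    (hf : LinearIndependent K (Sum.elim (fun j => (c j).1) (Sum.elim (fun j => (c j).2) ![b₁, b₂]))) :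
    PDC (Set.range c ∪ {(0, b₁), (0, b₂)}) (2*k+4) := by
  have h0 : GR K ![b₁, b₂] {(0, b₁), (0, b₂)} := GR_zero _ (X 0) (X 1) (by simp) (by simp)
  obtain ⟨l, hl, h1⟩ := h0.cols k (fun j => c j.succ.succ)
  have h2 := h1.last1 (c 0).1 (c 0).2 (c 1).1 (c 1).2
  have hs : (Fin.succ 0 : Fin (k+2)) = 1 := rfl
  refine lemW' h2 ?_ (Or.inl ?_) ?_ (by omega)
  · rw [Fin.range_cons, Fin.range_cons, Fin.range_cons, Fin.range_cons, hl]
    simp only [Set.mem_insert_iff, Set.mem_union, Set.mem_range, Fin.exists_fin_two]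
    rintro z (rfl|rfl|rfl|rfl|((rfl|rfl)|(⟨j,rfl⟩|⟨j,rfl⟩)))
    · exact (hc _).2
    · exact (hc _).1
    · exact (hc _).2
    · exact (hc _).1
    · exact hb₁
    · exact hb₂
    · exact (hc _).1
    · exact (hc _).2
  · rw [linearIndependent_iff_card_eq_finrank_span] at hf ⊢
    have hr : Set.range (Sum.elim (fun j => (c j).1) (Sum.elim (fun j => (c j).2) ![b₁, b₂])) =
        Set.range (Fin.cons (c 1).2 (Fin.cons (c 1).1 (Fin.cons (c 0).2 (Fin.cons (c 0).1 l :
          Fin (2+2*k+1) → (MvPolynomial (Fin N) K)) : Fin (2+2*k+2) → (MvPolynomial (Fin N) K)) : Fin (2+2*k+3) → (MvPolynomial (Fin N) K)) : Fin (2+2*k+4) → (MvPolynomial (Fin N) K)) := by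
      rw [Fin.range_cons, Fin.range_cons, Fin.range_cons, Fin.range_cons, hl]
      rw [Set.Sum.elim_range, Set.Sum.elim_range]
      ext z
      simp only [Set.mem_insert_iff, Set.mem_union, Set.mem_range, Fin.exists_fin_succ, hs]
      grind
    rw [← hr, ← hf]
    simp only [Fintype.card_sum, Fintype.card_fin]
    omega
  · ext z
    simp only [Set.mem_insert_iff, Set.mem_union, Set.mem_range, Fin.exists_fin_succ, hs]
    grind

lemma caseRel {k : ℕ} (u v b₁ b₂ : (MvPolynomial (Fin N) K)) (w : Fin (k+1) → (MvPolynomial (Fin N) K) × (MvPolynomial (Fin N) K))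
    (hv : v.IsHomogeneous 1)
    (hc : ∀ j, (w j).1.IsHomogeneous 1 ∧ (w j).2.IsHomogeneous 1)
    (hb₁ : b₁.IsHomogeneous 1) (hb₂ : b₂.IsHomogeneous 1) (e g₁ g₂ : K)
    (h : u = e • v + g₁ • b₁ + g₂ • b₂) :
    PDC (insert (u, v) (Set.range w ∪ {(0, b₁), (0, b₂)})) (2*k+4) := by
  obtain ⟨l, hl, h1⟩ := (GR_base u v b₁ b₂ e g₁ g₂ h).cols k (fun j => w j.succ)
  refine lemW' (h1.last0 (w 0).1 (w 0).2) ?_ (Or.inr (by omega)) ?_ (by omega)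
  · rw [Fin.range_cons, Fin.range_cons, hl]
    simp only [Set.mem_insert_iff, Set.mem_union, Set.mem_range, Fin.exists_fin_succ]
    rintro z (rfl|rfl|((rfl|rfl|rfl|hz)|(⟨j,rfl⟩|⟨j,rfl⟩)))
    · exact (hc _).2
    · exact (hc _).1
    · exact hv
    · exact hb₁
    · exact hb₂
    · exact hz.choose.elim0
    · exact (hc _).1
    · exact (hc _).2
  · ext z
    simp only [Set.mem_insert_iff, Set.mem_union, Set.mem_range, Fin.exists_fin_succ]
    grind

lemma caseLI {k : ℕ} (a c e b₁ b₂ : (MvPolynomial (Fin N) K)) (w : Fin k → (MvPolynomial (Fin N) K) × (MvPolynomial (Fin N) K))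
    (ha : a.IsHomogeneous 1) (hcc : c.IsHomogeneous 1) (he : e.IsHomogeneous 1)
    (hc : ∀ j, (w j).1.IsHomogeneous 1 ∧ (w j).2.IsHomogeneous 1)
    (hb₁ : b₁.IsHomogeneous 1) (hb₂ : b₂.IsHomogeneous 1) :
    PDC (insert (-a, e) (insert (c, a) (Set.range w ∪ {(0, b₁), (0, b₂)}))) (2*k+4) := by
  have h0 : GR K ![b₁, b₂] {(0, b₁), (0, b₂)} := GR_zero _ (X 0) (X 1) (by simp) (by simp)
  obtain ⟨l, hl, h1⟩ := h0.cols k w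
  refine lemW' (h1.last2 c a e) ?_ (Or.inr (by omega)) rfl (by omega)
  rw [Fin.range_cons, Fin.range_cons, Fin.range_cons, hl]
  simp only [Set.mem_insert_iff, Set.mem_union, Set.mem_range, Fin.exists_fin_two]
  rintro z (rfl|rfl|rfl|((rfl|rfl)|(⟨j,rfl⟩|⟨j,rfl⟩)))
  · exact he
  · exact ha
  · exact hcc
  · exact hb₁
  · exact hb₂
  · exact (hc _).1
  · exact (hc _).2

lemma caseZero {k : ℕ} (c : Fin (k+2) → (MvPolynomial (Fin N) K) × (MvPolynomial (Fin N) K)) (b b₁ b₂ : (MvPolynomial (Fin N) K))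
    (hc : ∀ j, (c j).1.IsHomogeneous 1 ∧ (c j).2.IsHomogeneous 1)
    (hb : b.IsHomogeneous 1) (g₁ g₂ : K) (h1 : b₁ = g₁ • b) (h2 : b₂ = g₂ • b) :
    PDC (Set.range c ∪ {(0, b₁), (0, b₂)}) (2*k+4) := by
  have h0 : GR K ![b] {(0, b₁), (0, b₂)} := GR_zero _ (C g₁ * X 0) (C g₂ * X 0)
    (by simp [h1, Algebra.smul_def]) (by simp [h2, Algebra.smul_def])
  obtain ⟨l, hl, h1⟩ := h0.cols (k+1) (fun j => c j.succ)
  refine lemW' (h1.last0 (c 0).1 (c 0).2) ?_ (Or.inr (by omega)) ?_ (by omega)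
  · rw [Fin.range_cons, Fin.range_cons, hl]
    simp only [Set.mem_insert_iff, Set.mem_union, Set.mem_range]
    rintro z (rfl|rfl|(⟨j, rfl⟩|(⟨j,rfl⟩|⟨j,rfl⟩)))
    · exact (hc _).2
    · exact (hc _).1
    · simpa using hb
    · exact (hc _).1
    · exact (hc _).2
  · ext z
    simp only [Set.mem_insert_iff, Set.mem_union, Set.mem_range, Fin.exists_fin_succ]
    grind

lemma LF_span {k : ℕ} {c : Fin k → (MvPolynomial (Fin N) K) × (MvPolynomial (Fin N) K)}
    (hc : ∀ j, (c j).1.IsHomogeneous 1 ∧ (c j).2.IsHomogeneous 1) {z : (MvPolynomial (Fin N) K) × (MvPolynomial (Fin N) K)}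
    (hz : z ∈ Submodule.span K (Set.range c)) : z.1.IsHomogeneous 1 ∧ z.2.IsHomogeneous 1 := by
  have : Submodule.span K (Set.range c) ≤
      (homogeneousSubmodule (Fin N) K 1).prod (homogeneousSubmodule (Fin N) K 1) := by
    rw [Submodule.span_le]
    rintro _ ⟨j, rfl⟩
    exact hc j
  exact this hz

lemma relLemma {k : ℕ} (c : Fin (k+2) → (MvPolynomial (Fin N) K) × (MvPolynomial (Fin N) K)) (b₁ b₂ : (MvPolynomial (Fin N) K))
    (hc : ∀ j, (c j).1.IsHomogeneous 1 ∧ (c j).2.IsHomogeneous 1)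
    (hb₁ : b₁.IsHomogeneous 1) (hb₂ : b₂.IsHomogeneous 1) (α β : Fin (k+2) → K) (g₁ g₂ : K)
    (hα : α ≠ 0)
    (hrel : (Fintype.linearCombination K c α).1 + (Fintype.linearCombination K c β).2
      + (g₁ • b₁ + g₂ • b₂) = 0) :
    PDC (Set.range c ∪ {(0, b₁), (0, b₂)}) (2*k+4) := by
  have hΦ : ∀ ω, Fintype.linearCombination K c ω ∈ Submodule.span K (Set.range c) := by
    intro ω
    rw [← Fintype.range_linearCombination]
    exact ⟨ω, rfl⟩
  by_cases hLI : LinearIndependent K ![α, β]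
  · obtain ⟨w, hw⟩ := complete (by omega) c ![α, β] hLI (j := k)
    have hwc : ∀ j, w j ∈ Submodule.span K (Set.range c) := by
      intro j; rw [hw]; exact Submodule.subset_span (Or.inr ⟨j, rfl⟩)
    have ha := LF_span hc (hΦ α)
    have hb := LF_span hc (hΦ β)
    set A := Fintype.linearCombination K c α with hA
    set B := Fintype.linearCombination K c β with hB
    have hgb : (g₁ • b₁ + g₂ • b₂).IsHomogeneous 1 := 
      (homogeneousSubmodule (Fin N) K 1).add_mem
        ((homogeneousSubmodule (Fin N) K 1).smul_mem g₁ hb₁)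
        ((homogeneousSubmodule (Fin N) K 1).smul_mem g₂ hb₂)
    have key := caseLI (B.2 + (g₁ • b₁ + g₂ • b₂)) B.1 A.2 b₁ b₂ w (hb.2.add hgb) hb.1 ha.2
      (fun j => LF_span hc (hwc j)) hb₁ hb₂
    have e1 : -(B.2 + (g₁ • b₁ + g₂ • b₂)) = A.1 := by linear_combination -hrel
    rw [e1] at key
    have e2 : (B.1, B.2 + (g₁ • b₁ + g₂ • b₂)) = B + (g₁ • (0, b₁) + g₂ • (0, b₂)) := by
      ext <;> simp
    rw [e2] at key
    refine PDC_K (K := K) ?_ ?_ key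
    · have m1 : ((0, b₁) : (MvPolynomial (Fin N) K) × (MvPolynomial (Fin N) K)) ∈ Submodule.span K (Set.range c ∪ {(0, b₁), (0, b₂)}) :=
        Submodule.subset_span (by simp)
      have m2 : ((0, b₂) : (MvPolynomial (Fin N) K) × (MvPolynomial (Fin N) K)) ∈ Submodule.span K (Set.range c ∪ {(0, b₁), (0, b₂)}) :=
        Submodule.subset_span (by simp)
      have m3 : Submodule.span K (Set.range c) ≤ Submodule.span K (Set.range c ∪ {(0, b₁), (0, b₂)}) :=
        Submodule.span_mono Set.subset_union_left
      rintro z (rfl|rfl|⟨j, rfl⟩|rfl|rfl)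
      · exact m3 (hΦ α)
      · exact add_mem (m3 (hΦ β)) (add_mem (Submodule.smul_mem _ _ m1) (Submodule.smul_mem _ _ m2))
      · exact m3 (hwc j)
      · exact m1
      · exact m2
    · set V := Submodule.span K (insert (A.1, A.2) (insert (B + (g₁ • ((0, b₁) : (MvPolynomial (Fin N) K) × (MvPolynomial (Fin N) K)) + g₂ • ((0, b₂) : (MvPolynomial (Fin N) K) × (MvPolynomial (Fin N) K))))
        (Set.range w ∪ {(0, b₁), (0, b₂)}))) with hV
      have m1 : ((0, b₁) : (MvPolynomial (Fin N) K) × (MvPolynomial (Fin N) K)) ∈ V := Submodule.subset_span (by simp)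
      have m2 : ((0, b₂) : (MvPolynomial (Fin N) K) × (MvPolynomial (Fin N) K)) ∈ V := Submodule.subset_span (by simp)
      have mA : A ∈ V := Submodule.subset_span (Or.inl rfl)
      have mB' : B + (g₁ • ((0, b₁) : (MvPolynomial (Fin N) K) × (MvPolynomial (Fin N) K)) + g₂ • ((0, b₂) : (MvPolynomial (Fin N) K) × (MvPolynomial (Fin N) K))) ∈ V :=
        Submodule.subset_span (Or.inr (Or.inl rfl))
      have mB : B ∈ V := by
        have := sub_mem mB' (add_mem (Submodule.smul_mem V g₁ m1) (Submodule.smul_mem V g₂ m2))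
        rwa [add_sub_cancel_right] at this
      have mw : ∀ j, w j ∈ V := fun j => Submodule.subset_span (by simp)
      have mc : Submodule.span K (Set.range c) ≤ V := by
        rw [hw, Submodule.span_le]
        rintro z (⟨i, rfl⟩|⟨j, rfl⟩)
        · fin_cases i
          · exact mA
          · exact mB
        · exact mw j
      rintro z (⟨j, rfl⟩|rfl|rfl)
      · exact mc (Submodule.subset_span ⟨j, rfl⟩)
      · exact m1
      · exact m2
  · rw [LinearIndependent.pair_iff' hα] at hLI
    push Not at hLI
    obtain ⟨q, rfl⟩ := hLI
    obtain ⟨w, hw⟩ := complete (by omega) c ![α] (LinearIndependent.of_subsingleton 0 hα) (j := k+1)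
    have hwc : ∀ j, w j ∈ Submodule.span K (Set.range c) := by
      intro j; rw [hw]; exact Submodule.subset_span (Or.inr ⟨j, rfl⟩)
    have ha := LF_span hc (hΦ α)
    rw [map_smul] at hrel
    set A := Fintype.linearCombination K c α with hA
    have key := caseRel A.1 A.2 b₁ b₂ w ha.2 (fun j => LF_span hc (hwc j)) hb₁ hb₂ (-q) (-g₁) (-g₂)
      (by
        rw [Prod.smul_snd] at hrel
        rw [neg_smul, neg_smul, neg_smul]
        linear_combination hrel)
    refine PDC_K (K := K) ?_ ?_ key
    · have m3 : Submodule.span K (Set.range c) ≤ Submodule.span K (Set.range c ∪ {(0, b₁), (0, b₂)}) :=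
        Submodule.span_mono Set.subset_union_left
      rintro z (rfl|⟨j, rfl⟩|rfl|rfl)
      · exact m3 (hΦ α)
      · exact m3 (hwc j)
      · exact Submodule.subset_span (by simp)
      · exact Submodule.subset_span (by simp)
    · have mc : Submodule.span K (Set.range c) ≤ Submodule.span K (insert (A.1, A.2) (Set.range w ∪ {(0, b₁), (0, b₂)})) := by
        rw [hw, Submodule.span_le]
        rintro z (⟨i, rfl⟩|⟨j, rfl⟩)
        · fin_cases i
          exact Submodule.subset_span (Or.inl rfl)
        · exact Submodule.subset_span (by simp)
      rintro z (⟨j, rfl⟩|rfl|rfl)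
      · exact mc (Submodule.subset_span ⟨j, rfl⟩)
      · exact Submodule.subset_span (by simp)
      · exact Submodule.subset_span (by simp)

lemma mainCok {k : ℕ} (c : Fin (k+2) → (MvPolynomial (Fin N) K) × (MvPolynomial (Fin N) K)) (b₁ b₂ : (MvPolynomial (Fin N) K))
    (hc : ∀ j, (c j).1.IsHomogeneous 1 ∧ (c j).2.IsHomogeneous 1)
    (hb₁ : b₁.IsHomogeneous 1) (hb₂ : b₂.IsHomogeneous 1) :
    PDC (Set.range c ∪ {(0, b₁), (0, b₂)}) (2*k+4) := by
  by_cases hf : LinearIndependent K (Sum.elim (fun j => (c j).1) (Sum.elim (fun j => (c j).2) ![b₁, b₂]))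
  · exact caseInd c b₁ b₂ hc hb₁ hb₂ hf
  rw [Fintype.not_linearIndependent_iff] at hf
  obtain ⟨g, hg, hne⟩ := hf
  obtain ⟨α, hα⟩ : ∃ α : Fin (k+2) → K, α = fun j => g (Sum.inl j) := ⟨_, rfl⟩
  obtain ⟨β, hβ⟩ : ∃ β : Fin (k+2) → K, β = fun j => g (Sum.inr (Sum.inl j)) := ⟨_, rfl⟩
  have hrel : (Fintype.linearCombination K c α).1 + (Fintype.linearCombination K c β).2
      + (g (Sum.inr (Sum.inr 0)) • b₁ + g (Sum.inr (Sum.inr 1)) • b₂) = 0 := by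
    rw [Fintype.sum_sum_type, Fintype.sum_sum_type, Fin.sum_univ_two] at hg
    simp only [Sum.elim_inl, Sum.elim_inr] at hg
    rw [← hg, hα, hβ]
    simp [Fintype.linearCombination_apply, Prod.fst_sum, Prod.snd_sum, add_assoc]
  by_cases h1 : α = 0
  swap
  · exact relLemma c b₁ b₂ hc hb₁ hb₂ α β _ _ h1 hrel
  by_cases h2 : β = 0
  · rw [h1, h2] at hrel
    simp only [map_zero, Prod.fst_zero, Prod.snd_zero, zero_add] at hrel
    by_cases h3 : g (Sum.inr (Sum.inr 0)) = 0
    · have h4 : g (Sum.inr (Sum.inr 1)) ≠ 0 := by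
        intro h4
        obtain ⟨i, hi⟩ := hne
        apply hi
        rcases i with i | i | i
        · exact (congrFun hα i).symm.trans (congrFun h1 i)
        · exact (congrFun hβ i).symm.trans (congrFun h2 i)
        · fin_cases i
          · exact h3
          · exact h4
      rw [h3, zero_smul, zero_add] at hrel
      have h5 := (smul_eq_zero.1 hrel).resolve_left h4
      exact caseZero c b₁ b₁ b₂ hc hb₁ 1 0 (by simp) (by simp [h5])
    · refine caseZero c b₂ b₁ b₂ hc hb₂ (-(g (Sum.inr (Sum.inr 0)))⁻¹ * g (Sum.inr (Sum.inr 1))) 1 ?_ (by simp)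
      rw [mul_smul, neg_smul]
      rw [eq_neg_of_add_eq_zero_right hrel, smul_neg, neg_neg, smul_smul, inv_mul_cancel₀ h3, one_smul]
  · apply PDC_row
    have e1 : rowOp (MvPolynomial (Fin N) K) '' (Set.range c ∪ {(0, b₁), (0, b₂)}) =
        Set.range (fun j => rowOp (MvPolynomial (Fin N) K) (c j)) ∪ {(0, b₁), (0, b₂)} := by
      rw [Set.image_union, Set.image_pair, ← Set.range_comp]
      congr 1
      simp [rowOp]
    rw [e1]
    refine relLemma _ b₁ b₂ ?_ hb₁ hb₂ (-β) β (g (Sum.inr (Sum.inr 0))) (g (Sum.inr (Sum.inr 1))) (neg_ne_zero.2 h2) (Eq.trans ?_ hrel)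
    · intro j
      exact ⟨(hc j).1, (hc j).2.add (hc j).1⟩
    · rw [h1]
      simp [Fintype.linearCombination_apply, Prod.fst_sum, Prod.snd_sum, rowOp, smul_add,
        Finset.sum_add_distrib]

end final

section stepA
lemma stepA {R : Type u} [CommRing R] [IsDomain R] {n : ℕ} {x y : R} (hx : Prime x) (hxy : ¬ x ∣ y)
    (u v : Fin n → R) {q : ℕ} (h : PDC (insert (x, y) (Set.range fun j => (u j, v j))) (q+2)) :
    PD R (R ⧸ repByMinors x y u v) (q+2) := by
  let M : R × (Fin n → R) →ₗ[R] R × R :=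
    LinearMap.coprod (LinearMap.toSpanSingleton R (R × R) (x, y))
      (Fintype.linearCombination R (fun j => (u j, v j)))
  let g : (Fin n → R) →ₗ[R] R := Fintype.linearCombination R (fun j => x * v j - y * u j)
  have hM : LinearMap.range M = Submodule.span R (insert (x, y) (Set.range fun j => (u j, v j))) := by
    rw [LinearMap.range_coprod, Fintype.range_linearCombination, Submodule.span_insert,
      LinearMap.range_toSpanSingleton]
  have hg : LinearMap.range g = repByMinors x y u v := by
    rw [Fintype.range_linearCombination]; rfl
  have hM1 : ∀ t w, (M (t, w)).1 = t * x + ∑ j, w j * u j := by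
    intro t w; simp [M, Fintype.linearCombination_apply, Prod.fst_sum]
  have hM2 : ∀ t w, (M (t, w)).2 = t * y + ∑ j, w j * v j := by
    intro t w; simp [M, Fintype.linearCombination_apply, Prod.snd_sum]
  have hgw : ∀ w, g w = x * (∑ j, w j * v j) - y * ∑ j, w j * u j := by
    intro w
    simp only [g, Fintype.linearCombination_apply, smul_eq_mul, Finset.mul_sum,
      ← Finset.sum_sub_distrib]
    refine Finset.sum_congr rfl fun j _ => by ring
  have k0 : ∀ z, z ∈ LinearMap.ker M ↔ z.1 * x + ∑ j, z.2 j * u j = 0 ∧ z.1 * y + ∑ j, z.2 j * v j = 0 := by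
    rintro ⟨t, w⟩
    rw [LinearMap.mem_ker, Prod.ext_iff, hM1, hM2]; rfl
  have hker : ∀ z ∈ LinearMap.ker M, (LinearMap.snd R R (Fin n → R)) z ∈ LinearMap.ker g := by
    intro z hz
    rw [k0] at hz
    rw [LinearMap.mem_ker, hgw]
    simp only [LinearMap.snd_apply]
    linear_combination x * hz.2 - y * hz.1
  let E : LinearMap.ker M →ₗ[R] LinearMap.ker g := (LinearMap.snd R R (Fin n → R)).restrict hker
  have hE : Function.Bijective E := by
    constructor
    · rw [injective_iff_map_eq_zero]
      rintro ⟨⟨t, w⟩, hz⟩ h0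
      have hw : w = 0 := congrArg Subtype.val h0
      subst hw
      rw [k0] at hz
      have : t = 0 := by simpa [hx.ne_zero] using hz.1
      subst this
      rfl
    · rintro ⟨w, hw⟩
      rw [LinearMap.mem_ker, hgw] at hw
      have hd : x ∣ y * ∑ j, w j * u j := ⟨∑ j, w j * v j, by linear_combination -hw⟩
      obtain ⟨t, ht⟩ := (hx.dvd_or_dvd hd).resolve_left hxy
      refine ⟨⟨(-t, w), ?_⟩, rfl⟩
      rw [k0]
      refine ⟨by simp only; linear_combination ht, ?_⟩
      apply mul_left_cancel₀ hx.ne_zero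
      simp only
      linear_combination hw + y * ht
  have p1 : PD R (LinearMap.range M) (q+1) := by
    rw [hM]; exact PD.sub _ (PD.of_projective _) h
  have p2 := PD.ker M.rangeRestrict M.surjective_rangeRestrict (PD.of_projective q) p1
  rw [LinearMap.ker_rangeRestrict] at p2
  have p3 := PD.iso (LinearEquiv.ofBijective E hE) p2
  rw [← LinearMap.ker_rangeRestrict] at p3
  have p4 := PD.of_ker g.rangeRestrict g.surjective_rangeRestrict p3 (PD.of_projective _)
  rw [hg] at p4
  exact PD.quot _ p4 (PD.of_projective _)
end stepA

/-- with `n = m + 2 ≥ 3`, if `I` is generated by `n` quadrics represented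
by minors by `M = [[x, 0, 0, a₁₃, …, a₁ₙ], [y, a₂₁, a₂₂, a₂₃, …, a₂ₙ]]`, where all entries
are linear forms or zero and `ht (x, y) = 2`, then `pd(R/I) ≤ 2n - 2`. -/
theorem stmt10 (K : Type u) [Field K] [IsAlgClosed K] (N m : ℕ) (hm : 1 ≤ m)
    (x y b₁ b₂ : MvPolynomial (Fin N) K) (hx : x.IsHomogeneous 1) (hy : y.IsHomogeneous 1)
    (hb₁ : b₁.IsHomogeneous 1) (hb₂ : b₂.IsHomogeneous 1)
    (hxy : LinearIndependent K ![x, y])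
    (hht : idealHeight (Ideal.span {x, y}) = 2)
    (u v : Fin m → MvPolynomial (Fin N) K)
    (hu : ∀ j, (u j).IsHomogeneous 1) (hv : ∀ j, (v j).IsHomogeneous 1)
    (I : Ideal (MvPolynomial (Fin N) K))
    (hI : I = repByMinors x y (Fin.cons 0 (Fin.cons 0 u)) (Fin.cons b₁ (Fin.cons b₂ v))) :
    projDim (MvPolynomial (Fin N) K) (MvPolynomial (Fin N) K ⧸ I) ≤ ((2 * (m + 2) - 2 : ℕ) : ℕ∞) := by
  subst hI
  obtain ⟨k, rfl⟩ : ∃ k, m = k + 1 := ⟨m - 1, by omega⟩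
  obtain ⟨hp, hnd⟩ := coprime_xy hx hy hxy
  have h1 := mainCok (k := k) (Fin.cons (x, y) (fun j => (u j, v j))) b₁ b₂ (by
    intro j
    refine Fin.cases ?_ (fun j => ?_) j
    · exact ⟨hx, hy⟩
    · exact ⟨hu j, hv j⟩) hb₁ hb₂
  have hs : Set.range (Fin.cons (x, y) (fun j => (u j, v j)) : Fin (k+2) → _ × _) ∪ {(0, b₁), (0, b₂)}
      = insert (x, y) (Set.range fun j : Fin (k+1+2) =>
        ((Fin.cons 0 (Fin.cons 0 u : Fin (k+1+1) → MvPolynomial (Fin N) K) : Fin (k+1+2) → MvPolynomial (Fin N) K) j,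
         (Fin.cons b₁ (Fin.cons b₂ v : Fin (k+1+1) → MvPolynomial (Fin N) K) : Fin (k+1+2) → MvPolynomial (Fin N) K) j)) := by
    rw [Fin.range_cons]
    ext z
    simp only [Set.mem_insert_iff, Set.mem_union, Set.mem_range, Fin.exists_fin_succ (n := k+1+1),
      Fin.exists_fin_succ (n := k+1), Fin.cons_zero, Fin.cons_succ, Set.mem_singleton_iff]
    grind
  rw [hs] at h1
  have h2 := (stepA hp hnd _ _ (q := 2 * k + 2) h1).toPdLE
  unfold projDim
  refine sInf_le ⟨2 * (k + 1 + 2) - 2, ?_, rfl⟩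
  have h3 : 2 * (k + 1 + 2) - 2 = 2 * k + 2 + 2 := by omega
  rw [h3]
  exact h2
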